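/- For every prime number p, taking L to be an algebraic closure of 𝔽_p, there exists a vector v ∈ V₄ all of whose 14 coefficients a,…,n lie in the prime subfield 𝔽_p and which is stable for the action of G₄ = SL₂(L)×SL₃(L)×Lˣ. (For instance, Δ₄(UX² + WY² + (U+W)Z² + WXY + (U+W)YZ, U) = 125.) -/

import Mathlib

/- Zariski-closedness of a subset of affine n-space over L: it is the common zero locus
of a set of polynomial functions (with respect to the fixed coordinates). -/
def IsZariskiClosed {n : ℕ} {L : Type*} [CommRing L] (s : Set (Fin n → L)) : Prop :=
  ∃ P : Set (MvPolynomial (Fin n) L), s = {x | ∀ p ∈ P, MvPolynomial.eval x p = 0}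

/- The pair (F, G) ∈ V₄ with coordinates c (variables: inl 0,1 = U,W; inr 0,1,2 = X,Y,Z):
F = (aU+bW)X² + (cU+dW)Y² + (eU+fW)Z² + (gU+hW)XY + (iU+jW)XZ + (kU+lW)YZ, G = mU + nW. -/
noncomputable def toV4 {L : Type*} [CommRing L] (c : Fin 14 → L) :
    MvPolynomial (Fin 2 ⊕ Fin 3) L × MvPolynomial (Fin 2 ⊕ Fin 3) L :=
  ((MvPolynomial.C (c 0) * MvPolynomial.X (Sum.inl 0) + MvPolynomial.C (c 1) * MvPolynomial.X (Sum.inl 1)) * MvPolynomial.X (Sum.inr 0) ^ 2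
    + (MvPolynomial.C (c 2) * MvPolynomial.X (Sum.inl 0) + MvPolynomial.C (c 3) * MvPolynomial.X (Sum.inl 1)) * MvPolynomial.X (Sum.inr 1) ^ 2
    + (MvPolynomial.C (c 4) * MvPolynomial.X (Sum.inl 0) + MvPolynomial.C (c 5) * MvPolynomial.X (Sum.inl 1)) * MvPolynomial.X (Sum.inr 2) ^ 2
    + (MvPolynomial.C (c 6) * MvPolynomial.X (Sum.inl 0) + MvPolynomial.C (c 7) * MvPolynomial.X (Sum.inl 1)) * (MvPolynomial.X (Sum.inr 0) * MvPolynomial.X (Sum.inr 1))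
    + (MvPolynomial.C (c 8) * MvPolynomial.X (Sum.inl 0) + MvPolynomial.C (c 9) * MvPolynomial.X (Sum.inl 1)) * (MvPolynomial.X (Sum.inr 0) * MvPolynomial.X (Sum.inr 2))
    + (MvPolynomial.C (c 10) * MvPolynomial.X (Sum.inl 0) + MvPolynomial.C (c 11) * MvPolynomial.X (Sum.inl 1)) * (MvPolynomial.X (Sum.inr 1) * MvPolynomial.X (Sum.inr 2)),
   MvPolynomial.C (c 12) * MvPolynomial.X (Sum.inl 0) + MvPolynomial.C (c 13) * MvPolynomial.X (Sum.inl 1))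

/- Linear substitution of (U,W) by A ∈ SL₂(L) and of (X,Y,Z) by B ∈ SL₃(L). -/
noncomputable def sub4 {L : Type*} [CommRing L]
    (A : Matrix.SpecialLinearGroup (Fin 2) L) (B : Matrix.SpecialLinearGroup (Fin 3) L)
    (v : MvPolynomial (Fin 2 ⊕ Fin 3) L) : MvPolynomial (Fin 2 ⊕ Fin 3) L :=
  MvPolynomial.aeval
    (Sum.elim (fun i => ∑ j : Fin 2, MvPolynomial.C (A.1 i j) * MvPolynomial.X (Sum.inl j))
              (fun i => ∑ j : Fin 3, MvPolynomial.C (B.1 i j) * MvPolynomial.X (Sum.inr j))) v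

/- The action of G₄ = SL₂(L) × SL₃(L) × Lˣ on V₄:
(A, B, t)·(F, G) = (t⁻¹·F′, t³·G′), where F′, G′ are obtained by linear substitution. -/
noncomputable def act4 {L : Type*} [Field L]
    (g : Matrix.SpecialLinearGroup (Fin 2) L × Matrix.SpecialLinearGroup (Fin 3) L × Lˣ)
    (v : MvPolynomial (Fin 2 ⊕ Fin 3) L × MvPolynomial (Fin 2 ⊕ Fin 3) L) :
    MvPolynomial (Fin 2 ⊕ Fin 3) L × MvPolynomial (Fin 2 ⊕ Fin 3) L :=
  (((g.2.2 : L))⁻¹ • sub4 g.1 g.2.1 v.1, ((g.2.2 : L)) ^ 3 • sub4 g.1 g.2.1 v.2)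

/- Stability: the orbit of v (in the coordinate space of V₄ with respect to its monomial
basis) is Zariski-closed and the stabilizer of v in G₄ is finite. -/
def Stable4 {L : Type*} [Field L] (c : Fin 14 → L) : Prop :=
  IsZariskiClosed {c' : Fin 14 → L |
    ∃ g : Matrix.SpecialLinearGroup (Fin 2) L × Matrix.SpecialLinearGroup (Fin 3) L × Lˣ,
      toV4 c' = act4 g (toV4 c)} ∧
  {g : Matrix.SpecialLinearGroup (Fin 2) L × Matrix.SpecialLinearGroup (Fin 3) L × Lˣ |
      act4 g (toV4 c) = toV4 c}.Finite

section Conics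

variable {R : Type*} [CommRing R]

/-- The value at `v` of the conic `q₀X² + q₁Y² + q₂Z² + q₃XY + q₄XZ + q₅YZ`. -/
def conicEval (q : Fin 6 → R) (v : Fin 3 → R) : R :=
  q 0 * v 0 ^ 2 + q 1 * v 1 ^ 2 + q 2 * v 2 ^ 2
    + q 3 * (v 0 * v 1) + q 4 * (v 0 * v 2) + q 5 * (v 1 * v 2)

/-- The polar form of a conic. -/
def conicPolar (q : Fin 6 → R) (v w : Fin 3 → R) : R :=
  2 * q 0 * (v 0 * w 0) + 2 * q 1 * (v 1 * w 1) + 2 * q 2 * (v 2 * w 2)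
    + q 3 * (v 0 * w 1 + v 1 * w 0) + q 4 * (v 0 * w 2 + v 2 * w 0)
    + q 5 * (v 1 * w 2 + v 2 * w 1)

/-- The coefficients of a conic after the linear substitution `B`. -/
def conicSub (q : Fin 6 → R) (B : Matrix (Fin 3) (Fin 3) R) : Fin 6 → R :=
  ![conicEval q (B.col 0), conicEval q (B.col 1), conicEval q (B.col 2),
    conicPolar q (B.col 0) (B.col 1), conicPolar q (B.col 0) (B.col 2),
    conicPolar q (B.col 1) (B.col 2)]

/-- The discriminant of a conic. -/
def conicDisc (q : Fin 6 → R) : R :=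
  4 * q 0 * q 1 * q 2 + q 3 * q 4 * q 5 - q 0 * q 5 ^ 2 - q 1 * q 4 ^ 2 - q 2 * q 3 ^ 2

/-- The coefficient of `U²W` in the discriminant of `U q + W r`. -/
def conicDiscMix (q r : Fin 6 → R) : R :=
  4 * (q 0 * q 1 * r 2 + q 0 * r 1 * q 2 + r 0 * q 1 * q 2)
    + (q 3 * q 4 * r 5 + q 3 * r 4 * q 5 + r 3 * q 4 * q 5)
    - (2 * q 0 * q 5 * r 5 + r 0 * q 5 ^ 2) - (2 * q 1 * q 4 * r 4 + r 1 * q 4 ^ 2)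
    - (2 * q 2 * q 3 * r 3 + r 2 * q 3 ^ 2)

theorem conicEval_conicSub (q : Fin 6 → R) (B : Matrix (Fin 3) (Fin 3) R) (v : Fin 3 → R) :
    conicEval (conicSub q B) v = conicEval q (B.mulVec v) := by
  simp [conicEval, conicSub, conicPolar, Matrix.mulVec, dotProduct, Fin.sum_univ_three,
    Matrix.col]
  ring

theorem conicDisc_conicSub (q : Fin 6 → R) (B : Matrix (Fin 3) (Fin 3) R) :
    conicDisc (conicSub q B) = B.det ^ 2 * conicDisc q := by
  simp only [conicDisc, conicEval, conicSub, conicPolar, Matrix.col_apply, Matrix.det_fin_three,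
    Matrix.cons_val]
  ring

theorem conicDiscMix_conicSub (q r : Fin 6 → R) (B : Matrix (Fin 3) (Fin 3) R) :
    conicDiscMix (conicSub q B) (conicSub r B) = B.det ^ 2 * conicDiscMix q r := by
  simp only [conicDiscMix, conicEval, conicSub, conicPolar, Matrix.col_apply,
    Matrix.det_fin_three, Matrix.cons_val]
  ring

end Conics

section Action

/-- The vector of `V₄` with `F = U·qU + W·qW` and `G = mU + nW`. -/
def pencilVec {R : Type*} (qU qW : Fin 6 → R) (m n : R) : Fin 14 → R :=
  ![qU 0, qW 0, qU 1, qW 1, qU 2, qW 2, qU 3, qW 3, qU 4, qW 4, qU 5, qW 5, m, n]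

theorem eq_pencilVec {R : Type*} (c : Fin 14 → R) :
    c = pencilVec ![c 0, c 2, c 4, c 6, c 8, c 10] ![c 1, c 3, c 5, c 7, c 9, c 11]
      (c 12) (c 13) := by
  ext i
  fin_cases i <;> rfl

variable {L : Type*} [Field L]

theorem toV4_injective : Function.Injective (toV4 : (Fin 14 → L) → _) := by
  intro c d h
  have h1 (u w x y z : L) := congrArg (fun P => MvPolynomial.eval
    (Sum.elim ![u, w] ![x, y, z]) P.1) h
  have h2 (u w : L) := congrArg (fun P => MvPolynomial.eval
    (Sum.elim ![u, w] ![0, 0, 0]) P.2) h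
  simp [toV4] at h1 h2
  have a0 := h1 1 0 1 0 0
  have a1 := h1 0 1 1 0 0
  have a2 := h1 1 0 0 1 0
  have a3 := h1 0 1 0 1 0
  have a4 := h1 1 0 0 0 1
  have a5 := h1 0 1 0 0 1
  have a6 := h1 1 0 1 1 0
  have a7 := h1 0 1 1 1 0
  have a8 := h1 1 0 1 0 1
  have a9 := h1 0 1 1 0 1
  have a10 := h1 1 0 0 1 1
  have a11 := h1 0 1 0 1 1
  have a12 := h2 1 0
  have a13 := h2 0 1
  simp at a0 a1 a2 a3 a4 a5 a12 a13
  simp [a0, a1, a2, a3, a4, a5] at a6 a7 a8 a9 a10 a11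
  ext i
  fin_cases i <;> assumption

theorem act4_toV4_pencilVec
    (g : Matrix.SpecialLinearGroup (Fin 2) L × Matrix.SpecialLinearGroup (Fin 3) L × Lˣ)
    (qU qW : Fin 6 → L) (m n : L) :
    act4 g (toV4 (pencilVec qU qW m n)) = toV4 (pencilVec
      ((g.2.2 : L)⁻¹ • (g.1.1 0 0 • conicSub qU g.2.1.1 + g.1.1 1 0 • conicSub qW g.2.1.1))
      ((g.2.2 : L)⁻¹ • (g.1.1 0 1 • conicSub qU g.2.1.1 + g.1.1 1 1 • conicSub qW g.2.1.1))
      ((g.2.2 : L) ^ 3 * (g.1.1 0 0 * m + g.1.1 1 0 * n))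
      ((g.2.2 : L) ^ 3 * (g.1.1 0 1 * m + g.1.1 1 1 * n))) := by
  obtain ⟨⟨A, hA⟩, ⟨B, hB⟩, t⟩ := g
  refine Prod.ext ?_ ?_
  · simp only [act4, sub4, toV4, pencilVec, conicSub, conicEval, conicPolar, Matrix.col_apply,
      Matrix.cons_val, map_add, map_mul, map_pow, MvPolynomial.aeval_X, MvPolynomial.algHom_C,
      Sum.elim_inl, Sum.elim_inr, Fin.sum_univ_two, Fin.sum_univ_three, Pi.add_apply,
      Pi.smul_apply, smul_eq_mul, MvPolynomial.smul_eq_C_mul, MvPolynomial.algebraMap_eq,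
      map_ofNat]
    ring
  · simp only [act4, sub4, toV4, pencilVec,
      Matrix.cons_val, map_add, map_mul, map_pow, MvPolynomial.aeval_X, MvPolynomial.algHom_C,
      Sum.elim_inl, Sum.elim_inr, Fin.sum_univ_two,
      MvPolynomial.smul_eq_C_mul, MvPolynomial.algebraMap_eq]
    ring

theorem sub4_sub4 (A A' : Matrix.SpecialLinearGroup (Fin 2) L)
    (B B' : Matrix.SpecialLinearGroup (Fin 3) L) (v : MvPolynomial (Fin 2 ⊕ Fin 3) L) :
    sub4 A' B' (sub4 A B v) = sub4 (A * A') (B * B') v := by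
  unfold sub4
  rw [← AlgHom.comp_apply]
  refine DFunLike.congr_fun (MvPolynomial.algHom_ext fun i => ?_) v
  rcases i with i | i <;>
    simp [Matrix.mul_apply, Fin.sum_univ_two, Fin.sum_univ_three, MvPolynomial.algHom_C] <;> ring

theorem act4_act4
    (g h : Matrix.SpecialLinearGroup (Fin 2) L × Matrix.SpecialLinearGroup (Fin 3) L × Lˣ)
    (v : MvPolynomial (Fin 2 ⊕ Fin 3) L × MvPolynomial (Fin 2 ⊕ Fin 3) L) :
    act4 h (act4 g v) = act4 (g * h) v := by
  have hs (a : L) (P : MvPolynomial (Fin 2 ⊕ Fin 3) L) :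
      sub4 h.1 h.2.1 (a • P) = a • sub4 h.1 h.2.1 P := map_smul _ a P
  simp only [act4, hs, sub4_sub4, smul_smul, Prod.fst_mul, Prod.snd_mul, Units.val_mul]
  congr 2
  · rw [mul_inv, mul_comm]
  · ring

theorem act4_one (v : MvPolynomial (Fin 2 ⊕ Fin 3) L × MvPolynomial (Fin 2 ⊕ Fin 3) L) :
    act4 1 v = v := by
  have hs (P : MvPolynomial (Fin 2 ⊕ Fin 3) L) : sub4 1 1 P = P := by
    unfold sub4
    conv_rhs => rw [← MvPolynomial.aeval_X_left_apply P]
    congr 1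
    refine MvPolynomial.algHom_ext fun i => ?_
    rcases i with i | i <;> simp [Matrix.one_apply]
  simp [act4, hs]

end Action

section Invariants

variable {R : Type*} [CommRing R]

/-- The Hessian covariant of the binary cubic `f₀U³ + f₁U²W + f₂UW² + f₃W³`, evaluated at the
zero `(n, -m)` of `mU + nW`. -/
def cubicHessAt (f₀ f₁ f₂ f₃ m n : R) : R :=
  (f₁ ^ 2 - 3 * f₀ * f₂) * n ^ 2 - (f₁ * f₂ - 9 * f₀ * f₃) * (n * m)
    + (f₂ ^ 2 - 3 * f₁ * f₃) * m ^ 2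

/-- The discriminant of the binary quartic
`(mU + nW)(f₀U³ + f₁U²W + f₂UW² + f₃W³)`. -/
def quarticDisc (f₀ f₁ f₂ f₃ m n : R) : R :=
  (f₀ * n ^ 3 - f₁ * n ^ 2 * m + f₂ * n * m ^ 2 - f₃ * m ^ 3) ^ 2
    * (f₁ ^ 2 * f₂ ^ 2 - 4 * f₀ * f₂ ^ 3 - 4 * f₁ ^ 3 * f₃ + 18 * f₀ * f₁ * f₂ * f₃
      - 27 * f₀ ^ 2 * f₃ ^ 2)

theorem cubicHessAt_comp (f₀ f₁ f₂ f₃ m n α β γ δ s t : R) :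
    cubicHessAt (s ^ 3 * (f₀ * α ^ 3 + f₁ * α ^ 2 * γ + f₂ * α * γ ^ 2 + f₃ * γ ^ 3))
      (s ^ 3 * (3 * f₀ * α ^ 2 * β + f₁ * (α ^ 2 * δ + 2 * α * β * γ)
        + f₂ * (2 * α * γ * δ + β * γ ^ 2) + 3 * f₃ * γ ^ 2 * δ))
      (s ^ 3 * (3 * f₃ * δ ^ 2 * γ + f₂ * (δ ^ 2 * α + 2 * δ * γ * β)
        + f₁ * (2 * δ * β * α + γ * β ^ 2) + 3 * f₀ * β ^ 2 * α))
      (s ^ 3 * (f₃ * δ ^ 3 + f₂ * δ ^ 2 * β + f₁ * δ * β ^ 2 + f₀ * β ^ 3))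
      (t ^ 3 * (α * m + γ * n)) (t ^ 3 * (β * m + δ * n))
      = (s * t) ^ 6 * (α * δ - β * γ) ^ 4 * cubicHessAt f₀ f₁ f₂ f₃ m n := by
  unfold cubicHessAt
  ring

theorem quarticDisc_comp (f₀ f₁ f₂ f₃ m n α β γ δ s t : R) :
    quarticDisc (s ^ 3 * (f₀ * α ^ 3 + f₁ * α ^ 2 * γ + f₂ * α * γ ^ 2 + f₃ * γ ^ 3))
      (s ^ 3 * (3 * f₀ * α ^ 2 * β + f₁ * (α ^ 2 * δ + 2 * α * β * γ)
        + f₂ * (2 * α * γ * δ + β * γ ^ 2) + 3 * f₃ * γ ^ 2 * δ))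
      (s ^ 3 * (3 * f₃ * δ ^ 2 * γ + f₂ * (δ ^ 2 * α + 2 * δ * γ * β)
        + f₁ * (2 * δ * β * α + γ * β ^ 2) + 3 * f₀ * β ^ 2 * α))
      (s ^ 3 * (f₃ * δ ^ 3 + f₂ * δ ^ 2 * β + f₁ * δ * β ^ 2 + f₀ * β ^ 3))
      (t ^ 3 * (α * m + γ * n)) (t ^ 3 * (β * m + δ * n))
      = (s * t) ^ 18 * (α * δ - β * γ) ^ 12 * quarticDisc f₀ f₁ f₂ f₃ m n := by
  have h1 : s ^ 3 * (f₀ * α ^ 3 + f₁ * α ^ 2 * γ + f₂ * α * γ ^ 2 + f₃ * γ ^ 3)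
        * (t ^ 3 * (β * m + δ * n)) ^ 3
      - s ^ 3 * (3 * f₀ * α ^ 2 * β + f₁ * (α ^ 2 * δ + 2 * α * β * γ)
        + f₂ * (2 * α * γ * δ + β * γ ^ 2) + 3 * f₃ * γ ^ 2 * δ)
        * (t ^ 3 * (β * m + δ * n)) ^ 2 * (t ^ 3 * (α * m + γ * n))
      + s ^ 3 * (3 * f₃ * δ ^ 2 * γ + f₂ * (δ ^ 2 * α + 2 * δ * γ * β)
        + f₁ * (2 * δ * β * α + γ * β ^ 2) + 3 * f₀ * β ^ 2 * α)
        * (t ^ 3 * (β * m + δ * n)) * (t ^ 3 * (α * m + γ * n)) ^ 2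
      - s ^ 3 * (f₃ * δ ^ 3 + f₂ * δ ^ 2 * β + f₁ * δ * β ^ 2 + f₀ * β ^ 3)
        * (t ^ 3 * (α * m + γ * n)) ^ 3
      = s ^ 3 * t ^ 9 * (α * δ - β * γ) ^ 3
        * (f₀ * n ^ 3 - f₁ * n ^ 2 * m + f₂ * n * m ^ 2 - f₃ * m ^ 3) := by
    ring
  unfold quarticDisc
  rw [h1]
  ring

theorem conicDisc_comb (q r : Fin 6 → R) (s α γ : R) :
    conicDisc (s • (α • q + γ • r)) = s ^ 3 * (conicDisc q * α ^ 3
      + conicDiscMix q r * α ^ 2 * γ + conicDiscMix r q * α * γ ^ 2 + conicDisc r * γ ^ 3) := by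
  simp only [conicDisc, conicDiscMix, Pi.smul_apply, Pi.add_apply, smul_eq_mul]
  ring

theorem conicDiscMix_comb (q r : Fin 6 → R) (s α β γ δ : R) :
    conicDiscMix (s • (α • q + γ • r)) (s • (β • q + δ • r)) = s ^ 3 *
      (3 * conicDisc q * α ^ 2 * β + conicDiscMix q r * (α ^ 2 * δ + 2 * α * β * γ)
        + conicDiscMix r q * (2 * α * γ * δ + β * γ ^ 2) + 3 * conicDisc r * γ ^ 2 * δ) := by
  simp only [conicDisc, conicDiscMix, Pi.smul_apply, Pi.add_apply, smul_eq_mul]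
  ring

/-- The Hessian of the discriminant cubic of `F` at the zero of `G`. -/
def pencilHess (qU qW : Fin 6 → R) (m n : R) : R :=
  cubicHessAt (conicDisc qU) (conicDiscMix qU qW) (conicDiscMix qW qU) (conicDisc qW) m n

/-- The discriminant of the quartic `G · disc F`. -/
def pencilDisc (qU qW : Fin 6 → R) (m n : R) : R :=
  quarticDisc (conicDisc qU) (conicDiscMix qU qW) (conicDiscMix qW qU) (conicDisc qW) m n

variable {L : Type*} [Field L]

theorem conicDiscMix_conicSub_specialLinear (q r : Fin 6 → R)
    (B : Matrix.SpecialLinearGroup (Fin 3) R) :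
    conicDiscMix (conicSub q B.1) (conicSub r B.1) = conicDiscMix q r := by
  rw [conicDiscMix_conicSub, B.2, one_pow, one_mul]

theorem conicDisc_conicSub_specialLinear (q : Fin 6 → R)
    (B : Matrix.SpecialLinearGroup (Fin 3) R) :
    conicDisc (conicSub q B.1) = conicDisc q := by
  rw [conicDisc_conicSub, B.2, one_pow, one_mul]

section

variable (A : Matrix.SpecialLinearGroup (Fin 2) L) (B : Matrix.SpecialLinearGroup (Fin 3) L)
  (t : Lˣ) (qU qW : Fin 6 → L) (m n : L)

theorem pencilHess_act :
    pencilHess ((t : L)⁻¹ • (A.1 0 0 • conicSub qU B.1 + A.1 1 0 • conicSub qW B.1))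
      ((t : L)⁻¹ • (A.1 0 1 • conicSub qU B.1 + A.1 1 1 • conicSub qW B.1))
      ((t : L) ^ 3 * (A.1 0 0 * m + A.1 1 0 * n)) ((t : L) ^ 3 * (A.1 0 1 * m + A.1 1 1 * n))
      = pencilHess qU qW m n := by
  have hA := A.2
  rw [Matrix.det_fin_two] at hA
  rw [pencilHess, conicDisc_comb, conicDiscMix_comb,
    add_comm (A.1 0 0 • _), add_comm (A.1 0 1 • _), conicDiscMix_comb, conicDisc_comb]
  simp only [conicDisc_conicSub_specialLinear, conicDiscMix_conicSub_specialLinear]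
  rw [cubicHessAt_comp, hA, inv_mul_cancel₀ t.ne_zero, one_pow, one_pow, one_mul, one_mul,
    pencilHess]

theorem pencilDisc_act :
    pencilDisc ((t : L)⁻¹ • (A.1 0 0 • conicSub qU B.1 + A.1 1 0 • conicSub qW B.1))
      ((t : L)⁻¹ • (A.1 0 1 • conicSub qU B.1 + A.1 1 1 • conicSub qW B.1))
      ((t : L) ^ 3 * (A.1 0 0 * m + A.1 1 0 * n)) ((t : L) ^ 3 * (A.1 0 1 * m + A.1 1 1 * n))
      = pencilDisc qU qW m n := by
  have hA := A.2
  rw [Matrix.det_fin_two] at hA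
  rw [pencilDisc, conicDisc_comb, conicDiscMix_comb,
    add_comm (A.1 0 0 • _), add_comm (A.1 0 1 • _), conicDiscMix_comb, conicDisc_comb]
  simp only [conicDisc_conicSub_specialLinear, conicDiscMix_conicSub_specialLinear]
  rw [quarticDisc_comp, hA, inv_mul_cancel₀ t.ne_zero, one_pow, one_pow, one_mul, one_mul,
    pencilDisc]

end

/-- The locus where the two invariants take prescribed values is Zariski closed. -/
theorem isZariskiClosed_invariants (H D : L) :
    IsZariskiClosed {c : Fin 14 → L | ∃ qU qW m n, c = pencilVec qU qW m n ∧
      pencilHess qU qW m n = H ∧ pencilDisc qU qW m n = D} := by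
  let X : Fin 14 → MvPolynomial (Fin 14) L := MvPolynomial.X
  let xU := ![X 0, X 2, X 4, X 6, X 8, X 10]
  let xW := ![X 1, X 3, X 5, X 7, X 9, X 11]
  refine ⟨{pencilHess xU xW (X 12) (X 13) - MvPolynomial.C H,
    pencilDisc xU xW (X 12) (X 13) - MvPolynomial.C D}, ?_⟩
  ext c
  have hH : MvPolynomial.eval c (pencilHess xU xW (X 12) (X 13))
      = pencilHess ![c 0, c 2, c 4, c 6, c 8, c 10] ![c 1, c 3, c 5, c 7, c 9, c 11]
        (c 12) (c 13) := by
    simp [pencilHess, cubicHessAt, conicDisc, conicDiscMix, xU, xW, X]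
  have hD : MvPolynomial.eval c (pencilDisc xU xW (X 12) (X 13))
      = pencilDisc ![c 0, c 2, c 4, c 6, c 8, c 10] ![c 1, c 3, c 5, c 7, c 9, c 11]
        (c 12) (c 13) := by
    simp [pencilDisc, quarticDisc, conicDisc, conicDiscMix, xU, xW, X]
  simp only [Set.mem_ofPred_eq, Set.mem_insert_iff, Set.mem_singleton_iff, forall_eq_or_imp,
    forall_eq, map_sub, MvPolynomial.eval_C, hH, hD, sub_eq_zero]
  constructor
  · rintro ⟨qU, qW, m, n, rfl, h1, h2⟩
    rw [← h1, ← h2]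
    have eU : qU = ![qU 0, qU 1, qU 2, qU 3, qU 4, qU 5] := by
      ext i; fin_cases i <;> rfl
    have eW : qW = ![qW 0, qW 1, qW 2, qW 3, qW 4, qW 5] := by
      ext i; fin_cases i <;> rfl
    rw [eU, eW]
    exact ⟨rfl, rfl⟩
  · rintro ⟨h1, h2⟩
    exact ⟨_, _, _, _, eq_pencilVec c, h1, h2⟩

end Invariants

section NormalForm

variable {L : Type*} [Field L]

/-- `c'` lies in the `G₄`-orbit of `c`. -/
def InOrbit (c c' : Fin 14 → L) : Prop :=
  ∃ g : Matrix.SpecialLinearGroup (Fin 2) L × Matrix.SpecialLinearGroup (Fin 3) L × Lˣ,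
    toV4 c' = act4 g (toV4 c)

theorem InOrbit.trans {c c' c'' : Fin 14 → L} (h : InOrbit c c') (h' : InOrbit c' c'') :
    InOrbit c c'' := by
  obtain ⟨g, hg⟩ := h
  obtain ⟨g', hg'⟩ := h'
  exact ⟨g * g', by rw [hg', hg, act4_act4]⟩

theorem InOrbit.symm {c c' : Fin 14 → L} (h : InOrbit c c') : InOrbit c' c := by
  obtain ⟨g, hg⟩ := h
  exact ⟨g⁻¹, by rw [hg, act4_act4, mul_inv_cancel, act4_one]⟩

theorem inOrbit_conicSub (B : Matrix.SpecialLinearGroup (Fin 3) L) (qU qW : Fin 6 → L) (m n : L) :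
    InOrbit (pencilVec qU qW m n) (pencilVec (conicSub qU B.1) (conicSub qW B.1) m n) :=
  ⟨(1, B, 1), by rw [act4_toV4_pencilVec]; simp⟩

theorem InOrbit.exists_pencil {qU qW : Fin 6 → L} {m n : L} {c : Fin 14 → L}
    (h : InOrbit (pencilVec qU qW m n) c) :
    ∃ qU' qW' m' n', c = pencilVec qU' qW' m' n' ∧
      pencilHess qU' qW' m' n' = pencilHess qU qW m n ∧
      pencilDisc qU' qW' m' n' = pencilDisc qU qW m n := by
  obtain ⟨g, hg⟩ := h
  rw [act4_toV4_pencilVec] at hg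
  exact ⟨_, _, _, _, toV4_injective hg, pencilHess_act .., pencilDisc_act ..⟩

theorem exists_binary_quadratic_zero [IsAlgClosed L] (a b c : L) :
    ∃ x y : L, (x ≠ 0 ∨ y ≠ 0) ∧ a * x ^ 2 + b * (x * y) + c * y ^ 2 = 0 := by
  by_cases ha : a = 0
  · exact ⟨1, 0, by simp, by simp [ha]⟩
  · obtain ⟨x, hx⟩ := IsAlgClosed.exists_root
      (Polynomial.C a * Polynomial.X ^ 2 + Polynomial.C b * Polynomial.X + Polynomial.C c)
      (by rw [Polynomial.degree_quadratic ha]; decide)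
    refine ⟨x, 1, by simp, ?_⟩
    simp [Polynomial.IsRoot] at hx
    linear_combination hx

theorem exists_specialLinear_col (v : Fin 3 → L) (hv : v ≠ 0) :
    ∃ B : Matrix.SpecialLinearGroup (Fin 3) L, B.1.col 0 = v := by
  have key : v 0 ≠ 0 ∨ v 1 ≠ 0 ∨ v 2 ≠ 0 := by
    by_contra! h
    exact hv (by ext i; fin_cases i <;> simp [h])
  rcases key with h | h | h
  · refine ⟨⟨!![v 0, 0, 0; v 1, (v 0)⁻¹, 0; v 2, 0, 1], ?_⟩, ?_⟩
    · simp [Matrix.det_fin_three, h]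
    · ext i; fin_cases i <;> rfl
  · refine ⟨⟨!![v 0, -(v 1)⁻¹, 0; v 1, 0, 0; v 2, 0, 1], ?_⟩, ?_⟩
    · simp [Matrix.det_fin_three, h]
    · ext i; fin_cases i <;> rfl
  · refine ⟨⟨!![v 0, 0, 1; v 1, -(v 2)⁻¹, 0; v 2, 0, 0], ?_⟩, ?_⟩
    · simp [Matrix.det_fin_three, h]
    · ext i; fin_cases i <;> rfl

/-- A singular conic and another conic have a common point. -/
theorem exists_common_zero [IsAlgClosed L] (q r : Fin 6 → L) (hq : conicDisc q = 0) :
    ∃ v : Fin 3 → L, v ≠ 0 ∧ conicEval q v = 0 ∧ conicEval r v = 0 := by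
  obtain ⟨x, y, hxy, h⟩ := exists_binary_quadratic_zero (q 0) (q 3) (q 1)
  obtain ⟨B, hB⟩ := exists_specialLinear_col ![x, y, 0] (by
    intro h0
    have h1 := congrFun h0 0
    have h2 := congrFun h0 1
    simp at h1 h2
    simp [h1, h2] at hxy)
  have hq' := conicDisc_conicSub_specialLinear q B
  have hr0 (v : Fin 3 → L) := conicEval_conicSub r B.1 v
  have hq0 (v : Fin 3 → L) := conicEval_conicSub q B.1 v
  have h0 : conicSub q B.1 0 = 0 := by
    change conicEval q (B.1.col 0) = 0
    simp only [hB, conicEval, Matrix.cons_val]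
    linear_combination h
  rw [hq] at hq'
  generalize conicSub q B.1 = q' at *
  generalize conicSub r B.1 = r' at *
  have key : ∃ w₁ w₂ : L, (w₁ ≠ 0 ∨ w₂ ≠ 0) ∧ q' 3 * w₁ + q' 4 * w₂ = 0 ∧
      q' 1 * w₁ ^ 2 + q' 5 * (w₁ * w₂) + q' 2 * w₂ ^ 2 = 0 := by
    by_cases hd : q' 3 = 0 ∧ q' 4 = 0
    · obtain ⟨w₁, w₂, hw, hz⟩ := exists_binary_quadratic_zero (q' 1) (q' 5) (q' 2)
      exact ⟨w₁, w₂, hw, by simp [hd], hz⟩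
    · refine ⟨q' 4, -q' 3, ?_, by ring, ?_⟩
      · by_contra! h
        exact hd ⟨by simpa using h.2, h.1⟩
      · simp only [conicDisc, h0] at hq'
        linear_combination -hq'
  obtain ⟨w₁, w₂, hw, hlin, hquad⟩ := key
  obtain ⟨a, b, hab, hr⟩ := exists_binary_quadratic_zero (r' 0) (r' 3 * w₁ + r' 4 * w₂)
    (r' 1 * w₁ ^ 2 + r' 5 * (w₁ * w₂) + r' 2 * w₂ ^ 2)
  refine ⟨B.1.mulVec ![a, b * w₁, b * w₂], ?_, ?_, ?_⟩
  · intro hz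
    have hz' := Matrix.eq_zero_of_mulVec_eq_zero (by rw [B.2]; exact one_ne_zero) hz
    have z0 := congrFun hz' 0
    have z1 := congrFun hz' 1
    have z2 := congrFun hz' 2
    simp at z0 z1 z2
    rcases hab with h | h
    · exact h z0
    · rcases hw with h' | h' <;> simp_all
  · rw [← hq0]
    simp [conicEval, h0]
    linear_combination a * b * hlin + b ^ 2 * hquad
  · rw [← hr0]
    simp [conicEval]
    linear_combination hr

/-- The normal form: `F = (W - e₁U)YZ + (W - e₂U)XZ + (W - e₃U)XY`, `G = U`. -/
def splitVec (e₁ e₂ e₃ : L) : Fin 14 → L :=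
  pencilVec ![0, 0, 0, -e₃, -e₂, -e₁] ![0, 0, 0, 1, 1, 1] 1 0

theorem inOrbit_splitVec_of_adapted {e₁ e₂ e₃ : L} (h23 : e₂ ≠ e₃)
    {qU qW : Fin 6 → L} (hU0 : qU 0 = 0) (hW0 : qW 0 = 0) (hU3 : qU 3 = -e₃) (hW3 : qW 3 = 1)
    (hU4 : qU 4 = -e₂) (hW4 : qW 4 = 1)
    (f₀ : conicDisc qU = -(e₁ * e₂ * e₃))
    (f₁ : conicDiscMix qU qW = e₁ * e₂ + e₁ * e₃ + e₂ * e₃)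
    (f₂ : conicDiscMix qW qU = -(e₁ + e₂ + e₃)) (f₃ : conicDisc qW = 1) :
    InOrbit (pencilVec qU qW 1 0) (splitVec e₁ e₂ e₃) := by
  have hne : (e₂ - e₃) ^ 2 ≠ 0 := pow_ne_zero 2 (sub_ne_zero.mpr h23)
  simp only [conicDisc, conicDiscMix, hU0, hW0, hU3, hW3, hU4, hW4] at f₀ f₁ f₂ f₃
  have hB : qU 1 = -e₃ * qW 1 := by
    refine sub_eq_zero.mp ((mul_eq_zero.mp ?_).resolve_left hne)
    linear_combination -f₀ - e₃ * f₁ - e₃ ^ 2 * f₂ - e₃ ^ 3 * f₃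
  have hC : qU 2 = -e₂ * qW 2 := by
    refine sub_eq_zero.mp ((mul_eq_zero.mp ?_).resolve_left hne)
    linear_combination -f₀ - e₂ * f₁ - e₂ ^ 2 * f₂ - e₂ ^ 3 * f₃
  have hF : qW 5 = 1 + qW 1 + qW 2 := by linear_combination f₃
  have hF' : qU 5 = -e₁ - e₂ * qW 1 - e₃ * qW 2 := by
    rw [hB, hC, hF] at f₂
    linear_combination f₂
  let B : Matrix.SpecialLinearGroup (Fin 3) L :=
    ⟨!![1, -qW 1, -qW 2; 0, 1, 0; 0, 0, 1], by simp [Matrix.det_fin_three]⟩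
  have h := inOrbit_conicSub B qU qW 1 0
  have eU : conicSub qU B.1 = ![0, 0, 0, -e₃, -e₂, -e₁] := by
    ext i
    fin_cases i <;> simp [conicSub, conicEval, conicPolar, B, hU0, hU3, hU4, hB, hC, hF']
    ring
  have eW : conicSub qW B.1 = ![0, 0, 0, 1, 1, 1] := by
    ext i
    fin_cases i <;> simp [conicSub, conicEval, conicPolar, B, hW0, hW3, hW4, hF]
    ring
  rwa [eU, eW] at h

theorem inOrbit_splitVec_of_basePoint {e₁ e₂ e₃ : L} (h12 : e₁ ≠ e₂) (h13 : e₁ ≠ e₃)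
    (h23 : e₂ ≠ e₃) {qU qW : Fin 6 → L} (hU0 : qU 0 = 0) (hW0 : qW 0 = 0)
    (f₀ : conicDisc qU = -(e₁ * e₂ * e₃))
    (f₁ : conicDiscMix qU qW = e₁ * e₂ + e₁ * e₃ + e₂ * e₃)
    (f₂ : conicDiscMix qW qU = -(e₁ + e₂ + e₃)) (f₃ : conicDisc qW = 1) :
    InOrbit (pencilVec qU qW 1 0) (splitVec e₁ e₂ e₃) := by
  have hδ : qU 3 * qW 4 - qW 3 * qU 4 ≠ 0 := by
    intro h0
    obtain ⟨v, hv, hz⟩ := Matrix.exists_mulVec_eq_zero_iff.mpr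
      (show (!![qU 3, qW 3; qU 4, qW 4]).det = 0 by rw [Matrix.det_fin_two_of, h0])
    have z0 := congrFun hz 0
    have z1 := congrFun hz 1
    simp [Matrix.mulVec, dotProduct, Fin.sum_univ_two] at z0 z1
    simp only [conicDisc, conicDiscMix, hU0, hW0] at f₀ f₁ f₂ f₃
    have hf : (v 1 - e₁ * v 0) * ((v 1 - e₂ * v 0) * (v 1 - e₃ * v 0)) = 0 := by
      linear_combination -(v 0 ^ 3 * f₀ + v 0 ^ 2 * v 1 * f₁ + v 0 * v 1 ^ 2 * f₂ + v 1 ^ 3 * f₃)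
        + ((qU 4 * v 0 + qW 4 * v 1) * (qU 5 * v 0 + qW 5 * v 1)
          - (qU 2 * v 0 + qW 2 * v 1) * (qU 3 * v 0 + qW 3 * v 1)) * z0
        - (qU 1 * v 0 + qW 1 * v 1) * (qU 4 * v 0 + qW 4 * v 1) * z1
    have hf' : (v 1 - e₁ * v 0) * (v 1 - e₂ * v 0) + (v 1 - e₁ * v 0) * (v 1 - e₃ * v 0)
        + (v 1 - e₂ * v 0) * (v 1 - e₃ * v 0) = 0 := by
      linear_combination -(v 0 ^ 2 * f₁ + 2 * v 0 * v 1 * f₂ + 3 * v 1 ^ 2 * f₃)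
        + (qW 4 * (qU 5 * v 0 + qW 5 * v 1) + (qU 4 * v 0 + qW 4 * v 1) * qW 5
          - qW 2 * (qU 3 * v 0 + qW 3 * v 1) - 2 * (qU 2 * v 0 + qW 2 * v 1) * qW 3) * z0
        + (qW 3 * (qU 5 * v 0 + qW 5 * v 1) - qW 1 * (qU 4 * v 0 + qW 4 * v 1)
          - 2 * (qU 1 * v 0 + qW 1 * v 1) * qW 4) * z1
    have hv0 : v 0 ≠ 0 := by
      intro h
      simp [h] at hf
      exact hv (by ext i; fin_cases i <;> simp [h, hf])
    have hsub {a b : L} (hab : a ≠ b) (ha : v 1 - a * v 0 = 0) : v 1 - b * v 0 ≠ 0 := by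
      intro hb
      exact hab (mul_right_cancel₀ hv0 (by linear_combination hb - ha))
    rcases mul_eq_zero.mp hf with h | h
    · simp [h, hsub h12 h, hsub h13 h] at hf'
    · rcases mul_eq_zero.mp h with h | h
      · simp [h, hsub h12.symm h, hsub h23 h] at hf'
      · simp [h, hsub h13.symm h, hsub h23.symm h] at hf'
  have hne : e₂ - e₃ ≠ 0 := sub_ne_zero.mpr h23
  let B : Matrix.SpecialLinearGroup (Fin 3) L :=
    ⟨!![(e₂ - e₃) / (qU 3 * qW 4 - qW 3 * qU 4), 0, 0;
      0, (-(qW 4 * e₃) - qU 4) / (e₂ - e₃), (-(qW 4 * e₂) - qU 4) / (e₂ - e₃);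
      0, (qW 3 * e₃ + qU 3) / (e₂ - e₃), (qW 3 * e₂ + qU 3) / (e₂ - e₃)], by
      simp [Matrix.det_fin_three]
      field_simp
      ring⟩
  refine (inOrbit_conicSub B qU qW 1 0).trans (inOrbit_splitVec_of_adapted h23 ?_ ?_ ?_ ?_ ?_ ?_
    ?_ ?_ ?_ ?_)
  · simp [conicSub, conicEval, B, hU0]
  · simp [conicSub, conicEval, B, hW0]
  · simp [conicSub, conicPolar, B, hU0]
    field_simp
    ring
  · simp [conicSub, conicPolar, B, hW0]
    field_simp
    ring
  · simp [conicSub, conicPolar, B, hU0]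
    field_simp
    ring
  · simp [conicSub, conicPolar, B, hW0]
    field_simp
    ring
  · rwa [conicDisc_conicSub_specialLinear]
  · rwa [conicDiscMix_conicSub_specialLinear]
  · rwa [conicDiscMix_conicSub_specialLinear]
  · rwa [conicDisc_conicSub_specialLinear]

theorem inOrbit_splitVec_of_cubic [IsAlgClosed L] {e₁ e₂ e₃ : L} (h12 : e₁ ≠ e₂) (h13 : e₁ ≠ e₃)
    (h23 : e₂ ≠ e₃) {qU qW : Fin 6 → L}
    (f₀ : conicDisc qU = -(e₁ * e₂ * e₃))
    (f₁ : conicDiscMix qU qW = e₁ * e₂ + e₁ * e₃ + e₂ * e₃)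
    (f₂ : conicDiscMix qW qU = -(e₁ + e₂ + e₃)) (f₃ : conicDisc qW = 1) :
    InOrbit (pencilVec qU qW 1 0) (splitVec e₁ e₂ e₃) := by
  obtain ⟨v, hv, hz1, hz2⟩ := exists_common_zero ((1 : L) • ((1 : L) • qU + e₁ • qW)) qW (by
    rw [conicDisc_comb, f₀, f₁, f₂, f₃]
    ring)
  obtain ⟨B, rfl⟩ := exists_specialLinear_col v hv
  refine (inOrbit_conicSub B qU qW 1 0).trans (inOrbit_splitVec_of_basePoint h12 h13 h23 ?_ ?_
    ?_ ?_ ?_ ?_)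
  · simp only [conicEval, Pi.smul_apply, Pi.add_apply, smul_eq_mul] at hz1 hz2
    simp only [conicSub, conicEval, Matrix.cons_val]
    linear_combination hz1 - e₁ * hz2
  · exact hz2
  · rwa [conicDisc_conicSub_specialLinear]
  · rwa [conicDiscMix_conicSub_specialLinear]
  · rwa [conicDiscMix_conicSub_specialLinear]
  · rwa [conicDisc_conicSub_specialLinear]

end NormalForm

section Normalization

variable {L : Type*} [Field L]

theorem pencilVec_inj {R : Type*} {qU qW qU' qW' : Fin 6 → R} {m n m' n' : R}
    (h : pencilVec qU qW m n = pencilVec qU' qW' m' n') :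
    qU = qU' ∧ qW = qW' ∧ m = m' ∧ n = n' := by
  refine ⟨?_, ?_, congrFun h 12, congrFun h 13⟩
  · ext i
    fin_cases i
    exacts [congrFun h 0, congrFun h 2, congrFun h 4, congrFun h 6, congrFun h 8, congrFun h 10]
  · ext i
    fin_cases i
    exacts [congrFun h 1, congrFun h 3, congrFun h 5, congrFun h 7, congrFun h 9, congrFun h 11]

theorem InOrbit.invariants_eq {qU qW qU' qW' : Fin 6 → L} {m n m' n' : L}
    (h : InOrbit (pencilVec qU qW m n) (pencilVec qU' qW' m' n')) :
    pencilHess qU' qW' m' n' = pencilHess qU qW m n ∧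
      pencilDisc qU' qW' m' n' = pencilDisc qU qW m n := by
  obtain ⟨rU, rW, k, l, he, hH, hD⟩ := h.exists_pencil
  obtain ⟨rfl, rfl, rfl, rfl⟩ := pencilVec_inj he
  exact ⟨hH, hD⟩

theorem conicSub_one {R : Type*} [CommRing R] (q : Fin 6 → R) : conicSub q 1 = q := by
  ext i
  fin_cases i <;> simp [conicSub, conicEval, conicPolar]

theorem exists_inOrbit_linear_eq_U {qU qW : Fin 6 → L} {m n : L} (h : m ≠ 0 ∨ n ≠ 0) :
    ∃ rU rW, InOrbit (pencilVec qU qW m n) (pencilVec rU rW 1 0) := by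
  obtain ⟨a, b, hab⟩ : ∃ a b : L, a * m + b * n = 1 := by
    rcases h with h | h
    · exact ⟨m⁻¹, 0, by simp [h]⟩
    · exact ⟨0, n⁻¹, by simp [h]⟩
  let A : Matrix.SpecialLinearGroup (Fin 2) L :=
    ⟨!![a, -n; b, m], by rw [Matrix.det_fin_two_of]; linear_combination hab⟩
  have hm : ((1 : Lˣ) : L) ^ 3 * (A.1 0 0 * m + A.1 1 0 * n) = 1 := by simp [A, hab]
  have hn : ((1 : Lˣ) : L) ^ 3 * (A.1 0 1 * m + A.1 1 1 * n) = 0 := by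
    simp [A]
    ring
  have h := act4_toV4_pencilVec (A, 1, 1) qU qW m n
  simp only [hm, hn] at h
  exact ⟨_, _, _, h.symm⟩

theorem exists_inOrbit_monic [IsAlgClosed L] {qU qW : Fin 6 → L} (h : conicDisc qW ≠ 0) :
    ∃ rU rW, conicDisc rW = 1 ∧ InOrbit (pencilVec qU qW 1 0) (pencilVec rU rW 1 0) := by
  obtain ⟨t, ht⟩ := IsAlgClosed.exists_pow_nat_eq (conicDisc qW)⁻¹ (n := 6) (by norm_num)
  have ht0 : t ≠ 0 := by
    rintro rfl
    exact inv_ne_zero h (by rw [← ht]; simp)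
  let A : Matrix.SpecialLinearGroup (Fin 2) L :=
    ⟨!![(t ^ 3)⁻¹, 0; 0, t ^ 3], by rw [Matrix.det_fin_two_of]; field_simp; ring⟩
  refine ⟨t⁻¹ • ((t ^ 3)⁻¹ • qU + (0 : L) • qW), t⁻¹ • ((0 : L) • qU + t ^ 3 • qW), ?_,
    (A, 1, Units.mk0 t ht0), ?_⟩
  · have ht' : conicDisc (t⁻¹ • ((0 : L) • qU + t ^ 3 • qW)) = t ^ 6 * conicDisc qW := by
      rw [conicDisc_comb]
      field_simp
      ring
    rw [ht', ht, inv_mul_cancel₀ h]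
  · rw [act4_toV4_pencilVec]
    simp [A, conicSub_one, ht0]

theorem inOrbit_translate (qU qW : Fin 6 → L) (s : L) :
    InOrbit (pencilVec qU qW 1 0) (pencilVec ((1 : L) • ((1 : L) • qU + s • qW))
      ((1 : L) • ((0 : L) • qU + (1 : L) • qW)) 1 0) := by
  let A : Matrix.SpecialLinearGroup (Fin 2) L :=
    ⟨!![1, 0; s, 1], by rw [Matrix.det_fin_two_of]; ring⟩
  refine ⟨(A, 1, 1), ?_⟩
  rw [act4_toV4_pencilVec]
  simp [A, conicSub_one]

/-- If a monic cubic with the given invariants can be translated to `∏ (W - eᵢU)`, then every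
vector with these invariants lies in the orbit of the normal form. -/
theorem inOrbit_splitVec_of_invariants [IsAlgClosed L] {e₁ e₂ e₃ H D : L} (h12 : e₁ ≠ e₂)
    (h13 : e₁ ≠ e₃) (h23 : e₂ ≠ e₃) (hD : D ≠ 0)
    (htrans : ∀ f₀ f₁ f₂ : L, cubicHessAt f₀ f₁ f₂ 1 1 0 = H → quarticDisc f₀ f₁ f₂ 1 1 0 = D →
      ∃ s, f₀ + f₁ * s + f₂ * s ^ 2 + s ^ 3 = -(e₁ * e₂ * e₃) ∧
        f₁ + 2 * s * f₂ + 3 * s ^ 2 = e₁ * e₂ + e₁ * e₃ + e₂ * e₃ ∧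
        f₂ + 3 * s = -(e₁ + e₂ + e₃))
    {qU qW : Fin 6 → L} {m n : L} (hHq : pencilHess qU qW m n = H)
    (hDq : pencilDisc qU qW m n = D) :
    InOrbit (pencilVec qU qW m n) (splitVec e₁ e₂ e₃) := by
  have hmn : m ≠ 0 ∨ n ≠ 0 := by
    by_contra! h
    obtain ⟨rfl, rfl⟩ := h
    exact hD (by rw [← hDq]; simp [pencilDisc, quarticDisc])
  obtain ⟨rU, rW, hr⟩ := exists_inOrbit_linear_eq_U (qU := qU) (qW := qW) hmn
  have hrW : conicDisc rW ≠ 0 := by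
    intro h
    apply hD
    rw [← hDq, ← hr.invariants_eq.2]
    simp [pencilDisc, quarticDisc, h]
  obtain ⟨sU, sW, h1, hs⟩ := exists_inOrbit_monic (qU := rU) hrW
  have hs' := hr.trans hs
  obtain ⟨iH, iD⟩ := hs'.invariants_eq
  rw [hHq, pencilHess, h1] at iH
  rw [hDq, pencilDisc, h1] at iD
  obtain ⟨s, g₀, g₁, g₂⟩ := htrans _ _ _ iH iD
  refine (hs'.trans (inOrbit_translate sU sW s)).trans
    (inOrbit_splitVec_of_cubic h12 h13 h23 ?_ ?_ ?_ ?_)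
  · rw [conicDisc_comb, h1]
    linear_combination g₀
  · rw [conicDiscMix_comb, h1]
    linear_combination g₁
  · rw [add_comm, add_comm ((1 : L) • sU), conicDiscMix_comb, h1]
    linear_combination g₂
  · rw [conicDisc_comb, h1]
    ring

end Normalization

section Stabilizer

variable {L : Type*} [Field L]

/-- The four base points of the pencil in normal form. -/
def splitBasePoint (e₁ e₂ e₃ : L) : Fin 4 → Fin 3 → L :=
  ![![1, 0, 0], ![0, 1, 0], ![0, 0, 1],
    ![(e₃ - e₁) * (e₁ - e₂), (e₂ - e₃) * (e₁ - e₂), (e₂ - e₃) * (e₃ - e₁)]]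

theorem exists_eq_smul_splitBasePoint {e₁ e₂ e₃ : L} (h12 : e₁ ≠ e₂) (h13 : e₁ ≠ e₃)
    (h23 : e₂ ≠ e₃) {v : Fin 3 → L} (hU : conicEval ![0, 0, 0, -e₃, -e₂, -e₁] v = 0)
    (hW : conicEval ![0, 0, 0, 1, 1, 1] v = 0) :
    ∃ (i : Fin 4) (x : L), v = x • splitBasePoint e₁ e₂ e₃ i := by
  have hα := sub_ne_zero.mpr h23
  have hβ := sub_ne_zero.mpr h13.symm
  have hγ := sub_ne_zero.mpr h12
  simp only [conicEval, Matrix.cons_val] at hU hW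
  have r0 : v 0 * ((e₃ - e₁) * v 1 - (e₁ - e₂) * v 2) = 0 := by
    linear_combination -hU - e₁ * hW
  have r1 : v 1 * ((e₂ - e₃) * v 0 - (e₁ - e₂) * v 2) = 0 := by
    linear_combination hU + e₂ * hW
  have r2 : v 2 * ((e₂ - e₃) * v 0 - (e₃ - e₁) * v 1) = 0 := by
    linear_combination -hU - e₃ * hW
  by_cases h0 : v 0 = 0
  · rcases mul_eq_zero.mp r1 with h1 | h1
    · refine ⟨2, v 2, ?_⟩
      ext i
      fin_cases i <;> simp [splitBasePoint, h0, h1]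
    · have h2 : v 2 = 0 := by simpa [h0, hγ] using h1
      refine ⟨1, v 1, ?_⟩
      ext i
      fin_cases i <;> simp [splitBasePoint, h0, h2]
  · have s0 := (mul_eq_zero.mp r0).resolve_left h0
    by_cases h1 : v 1 = 0
    · have h2 : v 2 = 0 := by simpa [h1, hγ] using s0
      refine ⟨0, v 0, ?_⟩
      ext i
      fin_cases i <;> simp [splitBasePoint, h1, h2]
    · have s1 := (mul_eq_zero.mp r1).resolve_left h1
      refine ⟨3, v 2 / ((e₂ - e₃) * (e₃ - e₁)), ?_⟩
      ext i
      fin_cases i <;> simp [splitBasePoint] <;> field_simp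
      · linear_combination s1
      · linear_combination s0

theorem conicPolar_smul_smul (q : Fin 6 → L) (x y : L) (v w : Fin 3 → L) :
    conicPolar q (x • v) (y • w) = x * y * conicPolar q v w := by
  simp only [conicPolar, Pi.smul_apply, smul_eq_mul]
  ring

/-- The stabilizer of the normal form is finite: its elements permute the base points up to
scalars, and they are determined by a sixth root of unity and the images of three base points. -/
theorem finite_stabilizer_splitVec {e₁ e₂ e₃ : L} (h12 : e₁ ≠ e₂) (h13 : e₁ ≠ e₃)
    (h23 : e₂ ≠ e₃) :
    {g : Matrix.SpecialLinearGroup (Fin 2) L × Matrix.SpecialLinearGroup (Fin 3) L × Lˣ |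
      act4 g (toV4 (splitVec e₁ e₂ e₃)) = toV4 (splitVec e₁ e₂ e₃)}.Finite := by
  set S := {g : Matrix.SpecialLinearGroup (Fin 2) L × Matrix.SpecialLinearGroup (Fin 3) L × Lˣ |
      act4 g (toV4 (splitVec e₁ e₂ e₃)) = toV4 (splitVec e₁ e₂ e₃)}
  set qU : Fin 6 → L := ![0, 0, 0, -e₃, -e₂, -e₁] with hqU
  set qW : Fin 6 → L := ![0, 0, 0, 1, 1, 1] with hqW
  have hS : ∀ g ∈ S, g.1.1 0 0 = ((g.2.2 : L) ^ 3)⁻¹ ∧ g.1.1 0 1 = 0 ∧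
      g.1.1 1 1 = (g.2.2 : L) ^ 3 ∧
      conicSub qW g.2.1.1 = ((g.2.2 : L)⁻¹ ^ 2) • qW ∧
      (g.2.2 : L)⁻¹ • (((g.2.2 : L) ^ 3)⁻¹ • conicSub qU g.2.1.1
        + (g.1.1 1 0 * (g.2.2 : L)⁻¹ ^ 2) • qW) = qU := by
    rintro ⟨A, B, t⟩ hg
    have hg' := hg
    change act4 _ (toV4 (pencilVec qU qW 1 0)) = toV4 (pencilVec qU qW 1 0) at hg'
    rw [act4_toV4_pencilVec] at hg'
    obtain ⟨hU, hW, hm, hn⟩ := pencilVec_inj (toV4_injective hg')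
    have ht := t.ne_zero
    have hA := A.2
    rw [Matrix.det_fin_two] at hA
    simp only [mul_one, mul_zero, add_zero] at hm hn hU hW ⊢
    have h01 : A.1 0 1 = 0 := by simpa [ht] using hn
    have h00 : A.1 0 0 = ((t : L) ^ 3)⁻¹ := eq_inv_of_mul_eq_one_right hm
    have h11 : A.1 1 1 = (t : L) ^ 3 := by
      rw [h01, h00] at hA
      field_simp at hA
      linear_combination hA
    have hW' : conicSub qW B.1 = ((t : L)⁻¹ ^ 2) • qW := by
      have h1 : (t : L)⁻¹ ^ 2 * ((t : L)⁻¹ * (t : L) ^ 3) = 1 := by field_simp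
      rw [h01, h11, zero_smul, zero_add, smul_smul] at hW
      have h2 := congrArg (fun q : Fin 6 → L => (t : L)⁻¹ ^ 2 • q) hW
      rwa [smul_smul, h1, one_smul] at h2
    refine ⟨h00, h01, h11, hW', ?_⟩
    rwa [h00, hW', smul_smul (A.1 1 0)] at hU
  refine Set.Finite.of_finite_image (f := fun g => (g.2.1.1, g.2.2)) ?_ ?_
  · let b := splitBasePoint e₁ e₂ e₃
    let d (i j k : Fin 4) : L := (Matrix.of ![b i, b j, b k]).det
    let Φ : Lˣ × Fin 4 × Fin 4 × Fin 4 → Matrix (Fin 3) (Fin 3) L × Lˣ := fun ⟨t, i, j, k⟩ =>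
      ((Matrix.of ![((t : L) ^ 2 * conicPolar qW (b j) (b k) / d i j k) • b i,
        ((t : L) ^ 2 * conicPolar qW (b i) (b k) / d i j k) • b j,
        ((t : L) ^ 2 * conicPolar qW (b i) (b j) / d i j k) • b k]).transpose, t)
    have hT : {t : Lˣ | t ^ 6 = 1}.Finite := (inferInstance : Finite (rootsOfUnity 6 L))
    refine ((hT.prod Set.finite_univ).image Φ).subset ?_
    rintro _ ⟨⟨A, B, t⟩, hg, rfl⟩
    obtain ⟨-, -, -, hW, hU⟩ := hS _ hg
    simp only at hW hU ⊢
    have ht := t.ne_zero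
    have evW (i : Fin 3) : conicEval qW (B.1.col i) = 0 := by
      have h0 := congrFun hW 0
      have h1 := congrFun hW 1
      have h2 := congrFun hW 2
      fin_cases i
      · simpa [conicSub, hqW] using h0
      · simpa [conicSub, hqW] using h1
      · simpa [conicSub, hqW] using h2
    have evU (i : Fin 3) : conicEval qU (B.1.col i) = 0 := by
      have h0 := congrFun hU 0
      have h1 := congrFun hU 1
      have h2 := congrFun hU 2
      fin_cases i
      · simpa [conicSub, hqW, hqU] using h0
      · simpa [conicSub, hqW, hqU] using h1
      · simpa [conicSub, hqW, hqU] using h2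
    obtain ⟨i, x, hi⟩ := exists_eq_smul_splitBasePoint h12 h13 h23 (evU 0) (evW 0)
    obtain ⟨j, y, hj⟩ := exists_eq_smul_splitBasePoint h12 h13 h23 (evU 1) (evW 1)
    obtain ⟨k, z, hk⟩ := exists_eq_smul_splitBasePoint h12 h13 h23 (evU 2) (evW 2)
    have p01 : x * y * conicPolar qW (b i) (b j) = (t : L)⁻¹ ^ 2 := by
      have := congrFun hW 3
      rw [← conicPolar_smul_smul, ← hi, ← hj]
      simpa [conicSub, hqW] using this
    have p02 : x * z * conicPolar qW (b i) (b k) = (t : L)⁻¹ ^ 2 := by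
      have := congrFun hW 4
      rw [← conicPolar_smul_smul, ← hi, ← hk]
      simpa [conicSub, hqW] using this
    have p12 : y * z * conicPolar qW (b j) (b k) = (t : L)⁻¹ ^ 2 := by
      have := congrFun hW 5
      rw [← conicPolar_smul_smul, ← hj, ← hk]
      simpa [conicSub, hqW] using this
    have hBt : B.1 = (Matrix.of ![x • b i, y • b j, z • b k]).transpose := by
      ext r c
      fin_cases c
      · exact congrFun hi r
      · exact congrFun hj r
      · exact congrFun hk r
    have hd : x * y * z * d i j k = 1 := by
      rw [← B.2, hBt, Matrix.det_transpose]
      simp [d, Matrix.det_fin_three]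
      ring
    have hd0 : d i j k ≠ 0 := by
      intro h
      simp [h] at hd
    refine ⟨(t, i, j, k), ⟨?_, trivial⟩, ?_⟩
    · have h := conicDisc_conicSub_specialLinear qW B
      rw [hW] at h
      simp [conicDisc, hqW] at h
      refine Units.ext ?_
      push_cast
      field_simp at h
      linear_combination -h
    · refine Prod.ext ?_ rfl
      have ex : (t : L) ^ 2 * conicPolar qW (b j) (b k) / d i j k = x := by
        field_simp at p12 ⊢
        linear_combination x * d i j k * p12 - (t : L) ^ 2 * conicPolar qW (b j) (b k) * hd
      have ey : (t : L) ^ 2 * conicPolar qW (b i) (b k) / d i j k = y := by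
        field_simp at p02 ⊢
        linear_combination y * d i j k * p02 - (t : L) ^ 2 * conicPolar qW (b i) (b k) * hd
      have ez : (t : L) ^ 2 * conicPolar qW (b i) (b j) / d i j k = z := by
        field_simp at p01 ⊢
        linear_combination z * d i j k * p01 - (t : L) ^ 2 * conicPolar qW (b i) (b j) * hd
      simp only [Φ, ex, ey, ez, hBt]
  · rintro ⟨A, B, t⟩ hg ⟨A', B', t'⟩ hg' h
    obtain ⟨hB, rfl⟩ := Prod.mk.inj h
    obtain rfl : B = B' := Subtype.ext hB
    obtain ⟨a00, a01, a11, -, aU⟩ := hS _ hg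
    obtain ⟨b00, b01, b11, -, bU⟩ := hS _ hg'
    have h5 := congrFun (aU.trans bU.symm) 5
    have ht := t.ne_zero
    have h10 : A.1 1 0 = A'.1 1 0 := by simpa [hqW, ht] using h5
    have hAA : A = A' := by
      ext i j
      fin_cases i <;> fin_cases j
      exacts [a00.trans b00.symm, a01.trans b01.symm, h10, a11.trans b11.symm]
    rw [hAA]

theorem InOrbit.finite_stabilizer {c c' : Fin 14 → L} (h : InOrbit c c')
    (hc' : {g : Matrix.SpecialLinearGroup (Fin 2) L × Matrix.SpecialLinearGroup (Fin 3) L × Lˣ |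
      act4 g (toV4 c') = toV4 c'}.Finite) :
    {g : Matrix.SpecialLinearGroup (Fin 2) L × Matrix.SpecialLinearGroup (Fin 3) L × Lˣ |
      act4 g (toV4 c) = toV4 c}.Finite := by
  obtain ⟨h, hh⟩ := h
  refine (hc'.preimage (f := fun g => h⁻¹ * g * h) ?_).subset ?_
  · intro a _ b _ hab
    simpa using hab
  · intro g hg
    change act4 g (toV4 c) = toV4 c at hg
    change act4 (h⁻¹ * g * h) (toV4 c') = toV4 c'
    rw [hh, act4_act4, ← mul_assoc, ← mul_assoc, mul_inv_cancel, one_mul, ← act4_act4, hg]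

end Stabilizer

section Stability

variable {L : Type*} [Field L] [IsAlgClosed L]

theorem stable4_pencilVec {e₁ e₂ e₃ H D : L} (h12 : e₁ ≠ e₂)
    (h13 : e₁ ≠ e₃) (h23 : e₂ ≠ e₃) (hD : D ≠ 0)
    (htrans : ∀ f₀ f₁ f₂ : L, cubicHessAt f₀ f₁ f₂ 1 1 0 = H → quarticDisc f₀ f₁ f₂ 1 1 0 = D →
      ∃ s, f₀ + f₁ * s + f₂ * s ^ 2 + s ^ 3 = -(e₁ * e₂ * e₃) ∧
        f₁ + 2 * s * f₂ + 3 * s ^ 2 = e₁ * e₂ + e₁ * e₃ + e₂ * e₃ ∧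
        f₂ + 3 * s = -(e₁ + e₂ + e₃))
    {qU qW : Fin 6 → L} {m n : L} (hHq : pencilHess qU qW m n = H)
    (hDq : pencilDisc qU qW m n = D) : Stable4 (pencilVec qU qW m n) := by
  have hsplit := inOrbit_splitVec_of_invariants h12 h13 h23 hD htrans hHq hDq
  refine ⟨?_, hsplit.finite_stabilizer (finite_stabilizer_splitVec h12 h13 h23)⟩
  convert isZariskiClosed_invariants H D using 1
  ext c
  constructor
  · intro hc
    obtain ⟨rU, rW, k, l, he, hH, hD'⟩ := InOrbit.exists_pencil hc
    exact ⟨rU, rW, k, l, he, hH.trans hHq, hD'.trans hDq⟩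
  · rintro ⟨rU, rW, k, l, rfl, hH, hD'⟩
    exact hsplit.trans (inOrbit_splitVec_of_invariants h12 h13 h23 hD htrans hH hD').symm

theorem stable4_of_two_ne_zero (h2 : (2 : L) ≠ 0) : Stable4 (splitVec (-1 : L) 1 0) := by
  have h4 : (4 : L) ≠ 0 := by
    rw [show (4 : L) = 2 * 2 by norm_num]
    exact mul_ne_zero h2 h2
  refine stable4_pencilVec (e₁ := -1) (e₂ := 1) (e₃ := 0) (H := 3) (D := 4) ?_ (by simp) (by simp)
    h4 ?_ ?_ ?_
  · intro h
    exact h2 (by linear_combination -h)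
  · intro f₀ f₁ f₂ hH hD
    simp only [cubicHessAt, quarticDisc] at hH hD
    by_cases h3 : (3 : L) = 0
    · have hf₂ : f₂ = 0 := by
        refine pow_eq_zero_iff (n := 2) two_ne_zero |>.mp ?_
        linear_combination hH + (f₁ + 1) * h3
      have hf₁ : f₁ = -1 := by
        refine sub_eq_zero.mp (pow_eq_zero_iff (n := 3) three_ne_zero |>.mp ?_)
        subst hf₂
        linear_combination -hD + (-f₁ ^ 3 - 1 + f₁ ^ 2 + f₁ - 9 * f₀ ^ 2) * h3
      obtain ⟨s, hs⟩ := IsAlgClosed.exists_root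
        (Polynomial.X ^ 3 - Polynomial.X + Polynomial.C f₀)
        (by
          have : (Polynomial.X ^ 3 - Polynomial.X + Polynomial.C f₀ : Polynomial L).degree = 3 := by
            compute_degree!
          rw [this]; decide)
      simp [Polynomial.IsRoot] at hs
      refine ⟨s, ?_, ?_, ?_⟩
      · rw [hf₁, hf₂]
        linear_combination hs
      · rw [hf₁, hf₂]
        linear_combination s ^ 2 * h3
      · rw [hf₂]
        linear_combination s * h3
    · obtain ⟨s, rfl⟩ : ∃ s, f₂ = -3 * s := ⟨-f₂ / 3, by field_simp⟩
      obtain rfl : f₁ = 3 * s ^ 2 - 1 :=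
        mul_left_cancel₀ h3 (by linear_combination -hH)
      have h0 : f₀ - s + s ^ 3 = 0 := by
        have h27 : (3 : L) ^ 3 * (f₀ - s + s ^ 3) ^ 2 = 0 := by linear_combination -hD
        exact pow_eq_zero_iff two_ne_zero |>.mp
          ((mul_eq_zero.mp h27).resolve_left (pow_ne_zero 3 h3))
      refine ⟨s, ?_, by ring, by ring⟩
      linear_combination h0
  · simp [pencilHess, cubicHessAt, conicDisc, conicDiscMix]
  · simp [pencilDisc, quarticDisc, conicDisc, conicDiscMix]
    norm_num

theorem stable4_of_two_eq_zero (h2 : (2 : L) = 0) :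
    Stable4 (pencilVec ![0, 0, 1, 1, 0, 0] ![1, 0, 0, 0, 0, 1] (1 : L) 0) := by
  obtain ⟨ω, hω⟩ := IsAlgClosed.exists_root
    (Polynomial.X ^ 2 + Polynomial.X + 1 : Polynomial L)
    (by
      have : (Polynomial.X ^ 2 + Polynomial.X + 1 : Polynomial L).degree = 2 := by
        compute_degree!
      rw [this]; decide)
  simp [Polynomial.IsRoot] at hω
  refine stable4_pencilVec (e₁ := 1) (e₂ := ω) (e₃ := ω + 1) (H := 0) (D := 1) ?_ ?_ (by simp)
    one_ne_zero ?_ ?_ ?_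
  · rintro rfl
    exact one_ne_zero (α := L) (by linear_combination hω - h2)
  · intro h
    have : ω = 0 := by linear_combination -h
    simp [this] at hω
  · intro f₀ f₁ f₂ hH hD
    simp only [cubicHessAt, quarticDisc] at hH hD
    have h1 : f₁ * f₂ + f₀ = 1 := by
      refine sub_eq_zero.mp (pow_eq_zero_iff (n := 2) two_ne_zero |>.mp ?_)
      linear_combination hD + (2 * f₀ * f₂ ^ 3 + 2 * f₁ ^ 3 + 14 * f₀ ^ 2 - 8 * f₀ * f₁ * f₂
        - f₁ * f₂ - f₀ + 1) * h2
    refine ⟨f₂, ?_, ?_, ?_⟩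
    · linear_combination h1 + hω + f₂ ^ 3 * h2
    · linear_combination hH - hω + (2 * f₁ + 2 * f₂ ^ 2 - ω) * h2
    · linear_combination (2 * f₂ + 1 + ω) * h2
  · simp [pencilHess, cubicHessAt, conicDisc, conicDiscMix]
  · simp [pencilDisc, quarticDisc, conicDisc, conicDiscMix]
    linear_combination -14 * h2

end Stability

/-
STATEMENT 8 (Corollary 4.3(1)): for every prime p and L an algebraic closure of 𝔽_p,
there is a stable vector in V₄ all of whose 14 coordinates lie in the prime subfield
𝔽_p (i.e. are images of integers).
-/
theorem exists_stable4_over_prime_field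
    (p : ℕ) (hp : p.Prime)
    {L : Type*} [Field L] [IsAlgClosed L] [CharP L p] :
    ∃ c : Fin 14 → L, (∀ i, ∃ z : ℤ, c i = (z : L)) ∧ Stable4 c := by
  by_cases h2 : (2 : L) = 0
  · refine ⟨_, fun i => ?_, stable4_of_two_eq_zero h2⟩
    refine ⟨pencilVec ![0, 0, 1, 1, 0, 0] ![1, 0, 0, 0, 0, 1] 1 0 i, ?_⟩
    fin_cases i <;> simp [pencilVec]
  · refine ⟨_, fun i => ?_, stable4_of_two_ne_zero h2⟩
    refine ⟨pencilVec ![0, 0, 0, 0, -1, 1] ![0, 0, 0, 1, 1, 1] 1 0 i, ?_⟩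
    fin_cases i <;> simp [splitVec, pencilVec]
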